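/- For every p with 0 < p < 1 and every integer m ≥ 2 there is a constant C = C(p,m) such that for every n ≥ 1 and every continuous function f : B_pⁿ → ℝ with ω_m(f;B_pⁿ) ≤ 1, where B_pⁿ := {x ∈ ℝⁿ : ∑_{i=1}^n |x_i|^p ≤ 1}, there exists a polynomial φ on ℝⁿ of total degree at most m−1 with sup_{x∈B_pⁿ} |f(x) − φ(x)| ≤ C; in particular the bound is independent of the dimension n. (Theorem 5.9: w_m(ℓ_pⁿ) ≤ C(p,m) for 0 < p < 1.) -/

import Mathlib

open Finset

/-- `diffBound m K f c` says that the `m`-th modulus of smoothness of `f` on `K` is at most `c`,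
i.e. `|Δ_h^m f(x)| ≤ c` whenever `x, x+h, …, x+mh ∈ K`. -/
def diffBound {E : Type*} [AddCommGroup E] [Module ℝ E] (m : ℕ) (K : Set E) (f : E → ℝ)
    (c : ℝ) : Prop :=
  ∀ x h : E, (∀ j : ℕ, j ≤ m → x + (j : ℝ) • h ∈ K) →
    |∑ j ∈ Finset.range (m + 1), (-1 : ℝ) ^ (m - j) * (m.choose j : ℝ) * f (x + (j : ℝ) • h)| ≤ c

/-- The (non-convex) closed unit ball of `ℓ_pⁿ` for `0 < p < 1`. -/
noncomputable def lpBall (n : ℕ) (p : ℝ) : Set (Fin n → ℝ) := {x | ∑ i, |x i| ^ p ≤ 1}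

namespace WhitneyAux

/-- Coefficients of a polynomial are controlled by values at equispaced nodes. -/
lemma coeff_bound (D : ℕ) (δ : ℝ) (hδ : 0 < δ) :
    ∃ C : ℝ, 0 ≤ C ∧ ∀ q : Polynomial ℝ, q.natDegree < D → ∀ B : ℝ,
      (∀ i : ℕ, i < D → |q.eval (δ * i)| ≤ B) → ∀ k, |q.coeff k| ≤ C * B := by
  classical
  let v : ℕ → ℝ := fun i => δ * i
  have hv : Set.InjOn v (Finset.range D) := by
    intro a _ b _ h
    have : δ * (a : ℝ) = δ * b := h
    exact_mod_cast mul_left_cancel₀ hδ.ne' this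
  refine ⟨∑ k ∈ range D, ∑ i ∈ range D, |(Lagrange.basis (range D) v i).coeff k|,
    by positivity, ?_⟩
  intro q hq B hB k
  have hD : 0 < D := by omega
  have hB0 : 0 ≤ B := (abs_nonneg _).trans (hB 0 hD)
  have hdeg : q.degree < (#(range D) : ℕ) := by
    rw [card_range]
    exact lt_of_le_of_lt Polynomial.degree_le_natDegree (by exact_mod_cast hq)
  by_cases hk : k < D
  · have h1 := Lagrange.eq_interpolate hv hdeg
    rw [h1, Lagrange.interpolate_apply, Polynomial.finsetSum_coeff]
    calc |∑ b ∈ range D, (Polynomial.C (Polynomial.eval (v b) q) * Lagrange.basis (range D) v b).coeff k|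
        ≤ ∑ b ∈ range D, |(Polynomial.C (Polynomial.eval (v b) q) * Lagrange.basis (range D) v b).coeff k| :=
          abs_sum_le_sum_abs _ _
      _ ≤ ∑ b ∈ range D, |(Lagrange.basis (range D) v b).coeff k| * B := by
          refine sum_le_sum fun b hb => ?_
          rw [Polynomial.coeff_C_mul, abs_mul, mul_comm]
          exact mul_le_mul_of_nonneg_left (hB b (mem_range.1 hb)) (abs_nonneg _)
      _ = (∑ b ∈ range D, |(Lagrange.basis (range D) v b).coeff k|) * B := by rw [sum_mul]
      _ ≤ _ := by
          refine mul_le_mul_of_nonneg_right ?_ hB0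
          exact single_le_sum (f := fun k => ∑ i ∈ range D, |(Lagrange.basis (range D) v i).coeff k|)
            (fun i _ => sum_nonneg fun _ _ => abs_nonneg _) (mem_range.2 hk)
  · rw [Polynomial.coeff_eq_zero_of_natDegree_lt (by omega), abs_zero]
    positivity

/-- bounded coefficients give bounded values -/
lemma eval_bound {D : ℕ} {q : Polynomial ℝ} (hq : q.natDegree < D) {B R : ℝ} (hR : 1 ≤ R)
    (hc : ∀ k, |q.coeff k| ≤ B) {t : ℝ} (ht : |t| ≤ R) : |q.eval t| ≤ D * R ^ D * B := by
  have hB : 0 ≤ B := (abs_nonneg _).trans (hc 0)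
  rw [Polynomial.eval_eq_sum_range' hq]
  calc |∑ i ∈ range D, q.coeff i * t ^ i| ≤ ∑ i ∈ range D, |q.coeff i * t ^ i| :=
        abs_sum_le_sum_abs _ _
    _ ≤ ∑ i ∈ range D, R ^ D * B := by
        refine sum_le_sum fun i hi => ?_
        rw [abs_mul, abs_pow, mul_comm]
        have h1 : |t| ^ i ≤ R ^ D := (pow_le_pow_left₀ (abs_nonneg _) ht i).trans
          (pow_le_pow_right₀ hR (mem_range.1 hi).le)
        exact mul_le_mul h1 (hc i) (abs_nonneg _) (by positivity)
    _ = _ := by rw [sum_const, card_range, nsmul_eq_mul, mul_assoc]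

/-- Lipschitz bound at zero -/
lemma lip_bound {D : ℕ} {q : Polynomial ℝ} (hq : q.natDegree < D) {B : ℝ}
    (hc : ∀ k, |q.coeff k| ≤ B) {t : ℝ} (ht : |t| ≤ 1) :
    |q.eval t - q.eval 0| ≤ D * B * |t| := by
  have hB : 0 ≤ B := (abs_nonneg _).trans (hc 0)
  rw [Polynomial.eval_eq_sum_range' hq, Polynomial.eval_eq_sum_range' hq, ← sum_sub_distrib]
  calc |∑ i ∈ range D, (q.coeff i * t ^ i - q.coeff i * 0 ^ i)|
      ≤ ∑ i ∈ range D, |q.coeff i * t ^ i - q.coeff i * 0 ^ i| := abs_sum_le_sum_abs _ _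
    _ ≤ ∑ i ∈ range D, B * |t| := by
        refine sum_le_sum fun i hi => ?_
        rcases Nat.eq_zero_or_pos i with rfl | hi
        · simp; positivity
        · rw [zero_pow hi.ne', mul_zero, sub_zero, abs_mul, abs_pow]
          refine mul_le_mul (hc i) ?_ (by positivity) hB
          calc |t| ^ i ≤ |t| ^ 1 := pow_le_pow_of_le_one (abs_nonneg _) ht hi
            _ = |t| := pow_one _
    _ = _ := by rw [sum_const, card_range, nsmul_eq_mul]; ring

/-- the alternating sum of a polynomial of small degree vanishes -/
lemma poly_diff_zero {m : ℕ} {q : Polynomial ℝ} (hq : q.natDegree < m) (x h : ℝ) :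
    ∑ j ∈ Finset.range (m + 1), (-1 : ℝ) ^ (m - j) * (m.choose j : ℝ) * q.eval (x + (j : ℝ) * h) = 0 := by
  let r : Polynomial ℝ := q.comp (Polynomial.C h * Polynomial.X + Polynomial.C x)
  have hr : r.natDegree < m := by
    refine lt_of_le_of_lt (Polynomial.natDegree_comp_le.trans ?_) hq
    calc q.natDegree * _ ≤ q.natDegree * 1 := Nat.mul_le_mul_left _ (Polynomial.natDegree_linear_le)
      _ = _ := mul_one _
  have h1 := congrFun (Polynomial.fwdDiff_iter_eq_zero_of_degree_lt hr) 0
  rw [fwdDiff_iter_eq_sum_shift] at h1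
  simp only [Pi.zero_apply] at h1
  rw [← h1]
  refine sum_congr rfl fun j _ => ?_
  simp only [r, Polynomial.eval_comp, zsmul_eq_mul]
  push_cast
  congr 2
  simp
  ring

lemma line_poly {σ : Type*} (P : MvPolynomial σ ℝ) (x h : σ → ℝ) :
    ∃ q : Polynomial ℝ, q.natDegree ≤ P.totalDegree ∧
      ∀ t : ℝ, q.eval t = MvPolynomial.eval (x + t • h) P := by
  refine ⟨MvPolynomial.aeval (fun i => Polynomial.C (h i) * Polynomial.X + Polynomial.C (x i)) P,
    ?_, ?_⟩
  · have := MvPolynomial.aeval_natDegree_le P (le_refl _)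
      (fun i => Polynomial.C (h i) * Polynomial.X + Polynomial.C (x i)) (n := 1)
      (fun i => Polynomial.natDegree_linear_le)
    simpa using this
  · intro t
    induction P using MvPolynomial.induction_on with
    | C a => simp
    | add p q hp hq => simp [hp, hq]
    | mul_X p i hp => simp [hp]; left; ring

lemma mv_diff_zero {σ : Type*} {m : ℕ} {P : MvPolynomial σ ℝ} (hP : P.totalDegree < m)
    (x h : σ → ℝ) :
    ∑ j ∈ Finset.range (m + 1), (-1 : ℝ) ^ (m - j) * (m.choose j : ℝ) *
      MvPolynomial.eval (x + (j : ℝ) • h) P = 0 := by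
  obtain ⟨q, hq, hq'⟩ := line_poly P x h
  have := poly_diff_zero (lt_of_le_of_lt hq hP) 0 1
  simpa [hq'] using this

lemma diffBound_sub_mv {σ : Type*} {m : ℕ} {K : Set (σ → ℝ)} {f : (σ → ℝ) → ℝ} {c : ℝ}
    (hf : diffBound m K f c) {P : MvPolynomial σ ℝ} (hP : P.totalDegree < m) :
    diffBound m K (fun x => f x - MvPolynomial.eval x P) c := by
  intro x h hx
  have := hf x h hx
  simp only [mul_sub, sum_sub_distrib]
  rwa [mv_diff_zero hP, sub_zero]

lemma diffBound_sub_poly {m : ℕ} {K : Set ℝ} {f : ℝ → ℝ} {c : ℝ}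
    (hf : diffBound m K f c) {P : Polynomial ℝ} (hP : P.natDegree < m) :
    diffBound m K (fun x => f x - P.eval x) c := by
  intro x h hx
  have := hf x h hx
  simp only [mul_sub, sum_sub_distrib]
  have h2 := poly_diff_zero hP x h
  simp only [smul_eq_mul] at *
  rwa [h2, sub_zero]

lemma diffBound_comp {E F : Type*} [AddCommGroup E] [Module ℝ E] [AddCommGroup F] [Module ℝ F]
    {m : ℕ} {K : Set E} {K' : Set F} {f : E → ℝ} {c : ℝ} (hf : diffBound m K f c)
    (Y Y' : F → E) (hY : ∀ x h (j : ℕ), Y (x + (j : ℝ) • h) = Y x + (j : ℝ) • Y' h)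
    (hK : ∀ x ∈ K', Y x ∈ K) : diffBound m K' (fun x => f (Y x)) c := by
  intro x h hx
  have := hf (Y x) (Y' h) (fun j hj => by rw [← hY]; exact hK _ (hx j hj))
  simpa only [hY] using this


/-- Newton-type approximation of a finite sequence with bounded `m`-th differences. -/
lemma seq_approx {m : ℕ} (hm : 0 < m) (N : ℕ) (a : ℕ → ℝ)
    (ha : ∀ j, j + m ≤ N →
      |∑ i ∈ range (m + 1), (-1 : ℝ) ^ (m - i) * (m.choose i : ℝ) * a (j + i)| ≤ 1) :
    ∃ q : Polynomial ℝ, q.natDegree < m ∧ ∀ j ≤ N, |a j - q.eval (j : ℝ)| ≤ (2 ^ m + 1) ^ N := by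
  classical
  let v : ℕ → ℝ := fun i => i
  have hv : Set.InjOn v (Finset.range m) := fun a _ b _ h => by
    have h : (a:ℝ) = b := h
    exact_mod_cast h
  let q := Lagrange.interpolate (range m) v a
  have hq : q.natDegree < m := by
    have h1 := Lagrange.degree_interpolate_lt a hv
    rw [card_range] at h1
    by_cases h0 : q = 0
    · rw [h0]; simpa using hm
    · exact (Polynomial.natDegree_lt_iff_degree_lt h0).2 h1
  have hqi : ∀ i < m, q.eval (i : ℝ) = a i := fun i hi =>
    Lagrange.eval_interpolate_at_node a hv (mem_range.2 hi)
  refine ⟨q, hq, ?_⟩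
  let b : ℕ → ℝ := fun j => a j - q.eval (j : ℝ)
  have hb : ∀ j, j + m ≤ N →
      |∑ i ∈ range (m + 1), (-1 : ℝ) ^ (m - i) * (m.choose i : ℝ) * b (j + i)| ≤ 1 := by
    intro j hj
    have h1 := ha j hj
    have h2 := poly_diff_zero hq j 1
    simp only [b, mul_sub, sum_sub_distrib]
    push_cast
    simp only [mul_one] at h2
    rwa [h2, sub_zero]
  have key : ∀ j ≤ N, |b j| ≤ (2 ^ m + 1) ^ j := by
    intro j
    induction j using Nat.strong_induction_on with
    | _ j ih =>
      intro hj
      by_cases hjm : j < m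
      · simp only [b, hqi j hjm, sub_self, abs_zero]; positivity
      · obtain ⟨k, rfl⟩ := Nat.exists_eq_add_of_le' (not_lt.1 hjm)
        have h1 := hb k hj
        rw [sum_range_succ] at h1
        simp only [Nat.sub_self, pow_zero, Nat.choose_self, Nat.cast_one, one_mul] at h1
        have h2 : |∑ i ∈ range m, (-1 : ℝ) ^ (m - i) * (m.choose i : ℝ) * b (k + i)|
            ≤ 2 ^ m * (2 ^ m + 1) ^ (k + m - 1) - 1 * 0 := by
          calc _ ≤ ∑ i ∈ range m, |(-1 : ℝ) ^ (m - i) * (m.choose i : ℝ) * b (k + i)| :=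
                abs_sum_le_sum_abs _ _
            _ ≤ ∑ i ∈ range m, (m.choose i : ℝ) * (2 ^ m + 1) ^ (k + m - 1) := by
                refine sum_le_sum fun i hi => ?_
                have hi := mem_range.1 hi
                rw [abs_mul, abs_mul, abs_pow, abs_neg, abs_one, one_pow, one_mul, Nat.abs_cast]
                refine mul_le_mul_of_nonneg_left ?_ (by positivity)
                refine (ih (k + i) (by omega) (by omega)).trans ?_
                exact pow_le_pow_right₀ (by linarith [pow_pos (two_pos : (0:ℝ) < 2) m]) (by omega)
            _ ≤ ∑ i ∈ range (m + 1), (m.choose i : ℝ) * (2 ^ m + 1) ^ (k + m - 1) := by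
                refine sum_le_sum_of_subset_of_nonneg (range_mono (by omega)) ?_
                intros; positivity
            _ = _ := by
                rw [← sum_mul]
                have := Nat.sum_range_choose m
                have h3 : (∑ i ∈ range (m + 1), (m.choose i : ℝ)) = 2 ^ m := by exact_mod_cast this
                rw [h3]; ring
        have h3 : (1 : ℝ) ≤ (2 ^ m + 1) ^ (k + m - 1) :=
          one_le_pow₀ (by linarith [pow_pos (two_pos : (0:ℝ) < 2) m])
        have h4 : ((2:ℝ) ^ m + 1) ^ (k + m) = (2 ^ m + 1) * (2 ^ m + 1) ^ (k + m - 1) := by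
          rw [← pow_succ']; congr 1; omega
        rw [h4]
        set S := ∑ i ∈ range m, (-1 : ℝ) ^ (m - i) * (m.choose i : ℝ) * b (k + i)
        have h5 : |b (k + m)| ≤ |S + b (k + m)| + |S| := by
          have := abs_sub (S + b (k+m)) S
          rwa [add_sub_cancel_left] at this
        linarith
  intro j hj
  refine (key j hj).trans (pow_le_pow_right₀ (by linarith [pow_pos (two_pos : (0:ℝ) < 2) m]) hj)

/-- quantitative continuity along a progression -/
lemma seq_cont {m : ℕ} (hm : 0 < m) : ∃ C : ℝ, 0 ≤ C ∧ ∀ K : ℕ, 0 < K → ∃ E : ℝ, ∀ (A : ℝ) (a : ℕ → ℝ),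
    (∀ j, j + m ≤ m * K →
      |∑ i ∈ range (m + 1), (-1 : ℝ) ^ (m - i) * (m.choose i : ℝ) * a (j + i)| ≤ 1) →
    (∀ j ≤ m * K, |a j| ≤ A) → |a 1 - a 0| ≤ C * A / K + E := by
  obtain ⟨C, hC, hcoef⟩ := coeff_bound m 1 one_pos
  refine ⟨m * C, by positivity, fun K hK => ?_⟩
  have hK' : (0:ℝ) < K := by exact_mod_cast hK
  set E0 : ℝ := (2 ^ m + 1) ^ (m * K)
  refine ⟨m * C * E0 / K + 2 * E0, fun A a ha hA => ?_⟩
  obtain ⟨q, hq, hqa⟩ := seq_approx hm (m * K) a ha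
  let r : Polynomial ℝ := q.comp (Polynomial.C (K:ℝ) * Polynomial.X)
  have hr : r.natDegree < m := by
    refine lt_of_le_of_lt (Polynomial.natDegree_comp_le.trans ?_) hq
    calc q.natDegree * _ ≤ q.natDegree * 1 := Nat.mul_le_mul_left _ ((Polynomial.natDegree_C_mul_le _ _).trans Polynomial.natDegree_X_le)
      _ = _ := mul_one _
  have hre : ∀ t, r.eval t = q.eval (K * t) := fun t => by simp [r, Polynomial.eval_comp]
  have hc := hcoef r hr (A + E0) (fun i hi => by
    have hle : K * i ≤ m * K := by rw [mul_comm]; exact Nat.mul_le_mul_right _ hi.le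
    have h1 := hqa (K * i) hle
    have h2 := hA (K * i) hle
    rw [hre, one_mul]
    push_cast at h1
    have := abs_sub_abs_le_abs_sub (q.eval ((K:ℝ) * i)) (a (K * i))
    rw [abs_sub_comm] at this
    linarith)
  have h1 := lip_bound hr hc (t := 1 / K) (by
    rw [abs_of_nonneg (by positivity), div_le_one hK']; exact_mod_cast hK)
  rw [hre, hre, mul_one_div_cancel hK'.ne', mul_zero, abs_of_nonneg (by positivity : (0:ℝ) ≤ 1 / K)] at h1
  have hmK : 1 ≤ m * K := Nat.mul_pos hm hK
  have h2 := hqa 1 hmK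
  have h3 := hqa 0 (by omega)
  push_cast at h2 h3
  have h4 : (m:ℝ) * (C * (A + E0)) * (1 / K) = m * C * A / K + m * C * E0 / K := by ring
  rw [h4] at h1
  rw [abs_le] at *
  constructor <;> linarith [h1.1, h1.2, h2.1, h2.2, h3.1, h3.2]

/-- One-dimensional Whitney theorem. -/
lemma whitney_one {m : ℕ} (hm : 0 < m) : ∃ W : ℝ, 0 ≤ W ∧ ∀ u : ℝ → ℝ,
    ContinuousOn u (Set.Icc (-1) 1) → diffBound m (Set.Icc (-1) 1) u 1 →
    ∃ q : Polynomial ℝ, q.natDegree < m ∧ ∀ x ∈ Set.Icc (-1 : ℝ) 1, |u x - q.eval x| ≤ W := by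
  classical
  obtain ⟨C1, hC1, hcont⟩ := seq_cont hm
  obtain ⟨C2, hC2, hcoef⟩ := coeff_bound m 1 one_pos
  obtain ⟨K, hK⟩ := exists_nat_gt (2 * C1)
  have hK' : (0:ℝ) < K := by linarith
  have hK0 : 0 < K := by exact_mod_cast hK'
  obtain ⟨E, hE⟩ := hcont K hK0
  have hm' : (0:ℝ) < m := by exact_mod_cast hm
  set M : ℕ := m * K with hM
  have hM0 : 0 < M := Nat.mul_pos hm hK0
  have hM' : (0:ℝ) < M := by exact_mod_cast hM0
  set E0 : ℝ := (2 ^ m + 1) ^ (2 * M)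
  set E1 : ℝ := E0 + m * (2 * m : ℝ) ^ m * (C2 * E0)
  have hE0 : 0 ≤ E0 := by positivity
  have hE1 : 0 ≤ E1 := by positivity
  refine ⟨2 * (E1 + |E|), by positivity, fun u hu hd => ?_⟩
  -- the interpolant
  let v : ℕ → ℝ := fun i => -1 + i / m
  have hv : Set.InjOn v (Finset.range m) := by
    intro a _ b _ h
    have h : (-1 : ℝ) + a / m = -1 + b / m := h
    have : (a : ℝ) = b := by field_simp at h; linarith
    exact_mod_cast this
  let q := Lagrange.interpolate (range m) v (fun i => u (v i))
  have hq : q.natDegree < m := by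
    have h1 := Lagrange.degree_interpolate_lt (fun i => u (v i)) hv
    rw [card_range] at h1
    by_cases h0 : q = 0
    · rw [h0]; simpa using hm
    · exact (Polynomial.natDegree_lt_iff_degree_lt h0).2 h1
  refine ⟨q, hq, ?_⟩
  set g : ℝ → ℝ := fun x => u x - q.eval x with hg
  have hgd : diffBound m (Set.Icc (-1) 1) g 1 := diffBound_sub_poly hd hq
  have hgc : ContinuousOn g (Set.Icc (-1) 1) := hu.sub q.continuous.continuousOn
  have hgz : ∀ i < m, g (-1 + i / m) = 0 := by
    intro i hi
    have : q.eval (v i) = u (v i) := Lagrange.eval_interpolate_at_node _ hv (mem_range.2 hi)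
    simp only [g]
    exact sub_eq_zero.2 this.symm
  -- the maximum
  obtain ⟨x0, hx0, hmax⟩ := isCompact_Icc.exists_isMaxOn (Set.nonempty_Icc.2 (by norm_num : (-1:ℝ) ≤ 1)) hgc.abs
  set A := |g x0|
  have hA : ∀ x ∈ Set.Icc (-1 : ℝ) 1, |g x| ≤ A := fun x hx => hmax hx
  have hA0 : 0 ≤ A := abs_nonneg _
  -- generic difference bound along progressions
  have hprog : ∀ x h : ℝ, ∀ N : ℕ, (∀ j ≤ N, x + j * h ∈ Set.Icc (-1 : ℝ) 1) →
      ∀ j, j + m ≤ N → |∑ i ∈ range (m + 1), (-1 : ℝ) ^ (m - i) * (m.choose i : ℝ) *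
        g (x + ((j + i : ℕ) : ℝ) * h)| ≤ 1 := by
    intro x h N hN j hj
    have := hgd (x + j * h) h (fun i hi => by
      have := hN (j + i) (by omega)
      push_cast at this
      rw [smul_eq_mul]
      convert this using 1; ring)
    have e : ∀ i : ℕ, x + ((j + i : ℕ) : ℝ) * h = x + j * h + (i : ℝ) • h := fun i => by
      push_cast; rw [smul_eq_mul]; ring
    simpa only [e] using this
  -- fine lattice
  have hlat : ∀ j ≤ 2 * M, |g (-1 + j * (1 / M))| ≤ E1 := by
    have hin : ∀ j ≤ 2 * M, (-1 : ℝ) + (j:ℝ) * (1 / M) ∈ Set.Icc (-1 : ℝ) 1 := by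
      intro j hj
      have hj' : (j : ℝ) ≤ 2 * M := by exact_mod_cast hj
      have h1 : (j : ℝ) * (1 / M) ≤ 2 := by
        rw [mul_one_div, div_le_iff₀ hM']; exact hj'
      have h2 : 0 ≤ (j : ℝ) * (1 / M) := by positivity
      constructor <;> linarith
    obtain ⟨s, hs, hsa⟩ := seq_approx hm (2 * M) (fun j => g (-1 + (j:ℝ) * (1 / M)))
      (hprog (-1) (1 / M) (2 * M) hin)
    let r : Polynomial ℝ := s.comp (Polynomial.C (K:ℝ) * Polynomial.X)
    have hr : r.natDegree < m := by
      refine lt_of_le_of_lt (Polynomial.natDegree_comp_le.trans ?_) hs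
      calc s.natDegree * _ ≤ s.natDegree * 1 := Nat.mul_le_mul_left _ ((Polynomial.natDegree_C_mul_le _ _).trans Polynomial.natDegree_X_le)
        _ = _ := mul_one _
    have hre : ∀ t, r.eval t = s.eval (K * t) := fun t => by simp [r, Polynomial.eval_comp]
    have hc := hcoef r hr E0 (fun i hi => by
      have hle : K * i ≤ 2 * M := by
        have : K * i ≤ K * m := Nat.mul_le_mul_left _ hi.le
        rw [hM]; nlinarith
      have h1 := hsa (K * i) hle
      have h2 : (-1 : ℝ) + ((K * i : ℕ) : ℝ) * (1 / M) = -1 + i / m := by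
        rw [hM]; push_cast; field_simp
      simp only [h2, hgz i hi, zero_sub, abs_neg] at h1
      push_cast at h1
      rw [hre, one_mul]
      exact h1)
    intro j hj
    have hj' : (j : ℝ) ≤ 2 * M := by exact_mod_cast hj
    have hm1 : (1:ℝ) ≤ m := by exact_mod_cast hm
    have h1 := eval_bound hr (R := 2 * m) (by linarith) hc (t := j / K) (by
      rw [abs_of_nonneg (by positivity), div_le_iff₀ hK']
      rw [hM] at hj'; push_cast at hj'; linarith)
    rw [hre, mul_div_cancel₀ _ hK'.ne'] at h1
    have h2 := hsa j hj
    have := abs_sub_abs_le_abs_sub (g (-1 + (j:ℝ) * (1 / M))) (s.eval (j:ℝ))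
    simp only [E1]
    linarith
  -- local continuity
  have hloc : ∀ x h : ℝ, (∀ j ≤ M, x + j * h ∈ Set.Icc (-1 : ℝ) 1) →
      |g (x + h)| ≤ E1 → |g x| ≤ E1 + (C1 * A / K + E) := by
    intro x h hx hxe
    have := hE A (fun j => g (x + (j:ℝ) * h)) (hprog x h M hx) (fun j hj => hA _ (hx j hj))
    simp only [Nat.cast_one, one_mul, Nat.cast_zero, zero_mul, add_zero] at this
    have h2 := abs_sub_abs_le_abs_sub (g x) (g (x + h))
    rw [abs_sub_comm (g x) (g (x + h))] at h2
    linarith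
  have hall : ∀ x ∈ Set.Icc (-1 : ℝ) 1, |g x| ≤ E1 + (C1 * A / K + E) := by
    intro x hx
    obtain ⟨hx1, hx2⟩ := hx
    rcases le_total x 0 with hx3 | hx3
    · set j := ⌈(x + 1) * M⌉₊
      have hj1 : (x + 1) * M ≤ j := Nat.le_ceil _
      have hj2 : (j : ℝ) < (x + 1) * M + 1 := Nat.ceil_lt_add_one (mul_nonneg (by linarith) hM'.le)
      have hj3 : j ≤ 2 * M := by
        have h1 : (j : ℝ) < (M:ℝ) + 1 := by nlinarith
        have h1 : j < M + 1 := by exact_mod_cast h1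
        omega
      have h1 := hlat j hj3
      have ha : 0 ≤ -1 + (j:ℝ) * (1 / M) - x := by
        have : x + 1 ≤ j / M := (le_div_iff₀ hM').2 hj1
        rw [mul_one_div]; linarith
      have hb : M * (-1 + (j:ℝ) * (1 / M) - x) ≤ 1 := by
        have : (M:ℝ) * (-1 + (j:ℝ) * (1 / M) - x) = j - (x + 1) * M := by field_simp; ring
        rw [this]; linarith
      refine hloc x (-1 + j * (1 / M) - x) (fun i hi => ?_) (by rwa [add_sub_cancel])
      have hi' : (i : ℝ) ≤ M := by exact_mod_cast hi
      have h3 := mul_le_mul_of_nonneg_right hi' ha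
      have h4 := mul_nonneg (Nat.cast_nonneg (α := ℝ) i) ha
      constructor <;> linarith
    · set j := ⌊(x + 1) * M⌋₊
      have hj1 : (j : ℝ) ≤ (x + 1) * M := Nat.floor_le (mul_nonneg (by linarith) hM'.le)
      have hj2 : (x + 1) * M < (j : ℝ) + 1 := Nat.lt_floor_add_one _
      have hj3 : j ≤ 2 * M := by
        have h1 : (j : ℝ) ≤ 2 * (M:ℝ) := by nlinarith
        exact_mod_cast h1
      have h1 := hlat j hj3
      have ha : 0 ≤ -(-1 + (j:ℝ) * (1 / M) - x) := by
        have : (j / M : ℝ) ≤ x + 1 := (div_le_iff₀ hM').2 hj1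
        rw [mul_one_div]; linarith
      have hb : M * (-(-1 + (j:ℝ) * (1 / M) - x)) ≤ 1 := by
        have : (M:ℝ) * (-(-1 + (j:ℝ) * (1 / M) - x)) = (x + 1) * M - j := by field_simp; ring
        rw [this]; linarith
      refine hloc x (-1 + j * (1 / M) - x) (fun i hi => ?_) (by rwa [add_sub_cancel])
      have hi' : (i : ℝ) ≤ M := by exact_mod_cast hi
      have h3 := mul_le_mul_of_nonneg_right hi' ha
      have h4 := mul_nonneg (Nat.cast_nonneg (α := ℝ) i) ha
      constructor <;> linarith
  have h1 := hall x0 hx0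
  have h2 : C1 * A / K ≤ A / 2 := by
    rw [div_le_div_iff₀ hK' two_pos]
    nlinarith
  intro x hx
  have h3 := hA x hx
  have h4 := le_abs_self E
  have h5 : A ≤ E1 + (C1 * A / K + E) := h1
  show |g x| ≤ _
  linarith


/-- the unit cube -/
def cube (σ : Type*) : Set (σ → ℝ) := {x | ∀ i, |x i| ≤ 1}

lemma homog_eval {σ : Type*} {φ : MvPolynomial σ ℝ} {k : ℕ} (h : φ.IsHomogeneous k) (t : ℝ)
    (a : σ → ℝ) : MvPolynomial.eval (t • a) φ = t ^ k * MvPolynomial.eval a φ := by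
  rw [MvPolynomial.eval_eq, MvPolynomial.eval_eq, mul_sum]
  refine sum_congr rfl fun e he => ?_
  have h1 : e.degree = k := by
    have := h (MvPolynomial.mem_support_iff.1 he)
    rw [Finsupp.degree_eq_weight_one]; exact this
  simp only [Pi.smul_apply, smul_eq_mul, mul_pow, prod_mul_distrib]
  rw [prod_pow_eq_pow_sum, ← h1, Finsupp.degree_apply]
  ring

lemma icc_abs {t : ℝ} : t ∈ Set.Icc (-1 : ℝ) 1 ↔ |t| ≤ 1 := by
  rw [abs_le]; rfl

lemma smul_cube {σ : Type*} {t : ℝ} {a : σ → ℝ} (ht : |t| ≤ 1) (ha : a ∈ cube σ) :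
    t • a ∈ cube σ := by
  intro i
  rw [Pi.smul_apply, smul_eq_mul, abs_mul]
  exact mul_le_one₀ ht (abs_nonneg _) (ha i)

lemma reduce_degree {m : ℕ} (hm : 0 < m) (D : ℕ) : ∃ C : ℝ, 0 ≤ C ∧ ∀ (d : ℕ) (g : (Fin d → ℝ) → ℝ),
    ContinuousOn g (cube (Fin d)) → diffBound m (cube (Fin d)) g 1 →
    ∀ (T : MvPolynomial (Fin d) ℝ) (B : ℝ), T.totalDegree < D → 
      (∀ x ∈ cube (Fin d), |g x - MvPolynomial.eval x T| ≤ B) →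
      ∃ P : MvPolynomial (Fin d) ℝ, P.totalDegree < m ∧
        ∀ x ∈ cube (Fin d), |g x - MvPolynomial.eval x P| ≤ C * (B + 1) := by
  obtain ⟨W, hW, hwhit⟩ := whitney_one hm
  set D' := D + m with hD'
  have hD0 : (0:ℝ) < D' := by rw [hD']; exact_mod_cast (by omega)
  obtain ⟨C, hC, hcoef⟩ := coeff_bound D' (1 / D') (by positivity)
  refine ⟨1 + D' * (C * (1 + W)), by positivity, ?_⟩
  intro d g hg hd T B hT hB
  have hB0 : 0 ≤ B := (abs_nonneg _).trans (hB 0 (fun i => by simp))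
  let c : ℕ → MvPolynomial (Fin d) ℝ := fun k => MvPolynomial.homogeneousComponent k T
  have hsum : ∀ x, MvPolynomial.eval x T = ∑ k ∈ range D', MvPolynomial.eval x (c k) := by
    intro x
    have h1 : ∑ k ∈ range D', c k = T := by
      rw [← MvPolynomial.sum_homogeneousComponent T]
      symm
      refine sum_subset (range_mono (by omega)) fun k _ hk => ?_
      refine MvPolynomial.homogeneousComponent_eq_zero _ _ ?_
      simp at hk; omega
    rw [← map_sum, h1]
  refine ⟨∑ k ∈ range m, c k, ?_, ?_⟩
  · refine lt_of_le_of_lt (MvPolynomial.totalDegree_finsetSum_le (d := m - 1) fun k hk => ?_) (by omega)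
    have hk := mem_range.1 hk
    exact (MvPolynomial.homogeneousComponent_isHomogeneous k T).totalDegree_le.trans (by omega)
  intro a ha
  obtain ⟨q, hq, hqu⟩ := hwhit (fun t => g (t • a))
    (hg.comp (by fun_prop) (fun t ht => smul_cube (icc_abs.1 ht) ha))
    (diffBound_comp hd (fun t => t • a) (fun t => t • a)
      (fun x h j => by simp [add_smul, mul_smul]) (fun t ht => smul_cube (icc_abs.1 ht) ha))
  let r : Polynomial ℝ := ∑ k ∈ range D', Polynomial.monomial k (MvPolynomial.eval a (c k))
  have hr : ∀ t, r.eval t = MvPolynomial.eval (t • a) T := by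
    intro t
    rw [hsum, Polynomial.eval_finsetSum]
    refine sum_congr rfl fun k _ => ?_
    rw [homog_eval (MvPolynomial.homogeneousComponent_isHomogeneous k T), Polynomial.eval_monomial, mul_comm]
  have hrc : ∀ k < D', r.coeff k = MvPolynomial.eval a (c k) := by
    intro k hk
    simp [r, Polynomial.finsetSum_coeff, Polynomial.coeff_monomial, hk]
  have hrd : r.natDegree < D' := by
    refine lt_of_le_of_lt (Polynomial.natDegree_sum_le_of_forall_le (n := D' - 1) _ _ fun k hk => ?_) (by omega)
    have hk := mem_range.1 hk
    exact (Polynomial.natDegree_monomial_le _).trans (by omega)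
  have hs : (r - q).natDegree < D' :=
    lt_of_le_of_lt (Polynomial.natDegree_sub_le _ _) (max_lt hrd (by omega))
  have hcb := hcoef (r - q) hs (B + W) (fun i hi => by
    have ht : |(1:ℝ) / D' * i| ≤ 1 := by
      rw [abs_of_nonneg (by positivity), one_div_mul_eq_div, div_le_one hD0]
      exact_mod_cast hi.le
    have h1 := hqu _ (icc_abs.2 ht)
    have h2 := hB _ (smul_cube ht ha)
    rw [Polynomial.eval_sub, hr]
    rw [abs_le] at *
    constructor <;> linarith [h1.1, h1.2, h2.1, h2.2])
  have htail : |∑ k ∈ range D', MvPolynomial.eval a (c k) - ∑ k ∈ range m, MvPolynomial.eval a (c k)|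
      ≤ D' * (C * (B + W)) := by
    rw [← sum_sdiff (range_mono (show m ≤ D' by omega)), add_sub_cancel_right]
    calc _ ≤ ∑ k ∈ range D' \ range m, |MvPolynomial.eval a (c k)| := abs_sum_le_sum_abs _ _
      _ ≤ ∑ k ∈ range D' \ range m, C * (B + W) := by
          refine sum_le_sum fun k hk => ?_
          simp only [mem_sdiff, mem_range, not_lt] at hk
          have := hcb k
          rwa [Polynomial.coeff_sub, hrc k hk.1, Polynomial.coeff_eq_zero_of_natDegree_lt (p := q) (by omega),
            sub_zero] at this
      _ ≤ ∑ k ∈ range D', C * (B + W) :=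
          sum_le_sum_of_subset_of_nonneg sdiff_subset (fun _ _ _ => by positivity)
      _ = _ := by rw [sum_const, card_range, nsmul_eq_mul]
  have h1 := hB a ha
  rw [hsum] at h1
  rw [map_sum]
  have h2 : (D':ℝ) * (C * (B + W)) ≤ D' * (C * ((1 + W) * (B + 1))) := by
    gcongr; nlinarith
  calc _ ≤ B + D' * (C * (B + W)) := by
        rw [abs_le] at *
        constructor <;> linarith [h1.1, h1.2, htail.1, htail.2]
    _ ≤ _ := by nlinarith

lemma whitney_cube {m : ℕ} (hm : 0 < m) (d : ℕ) : ∃ C : ℝ, 0 ≤ C ∧ ∀ g : (Fin d → ℝ) → ℝ,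
    ContinuousOn g (cube (Fin d)) → diffBound m (cube (Fin d)) g 1 →
      ∃ P : MvPolynomial (Fin d) ℝ, P.totalDegree < m ∧
        ∀ x ∈ cube (Fin d), |g x - MvPolynomial.eval x P| ≤ C := by
  classical
  induction d with
  | zero =>
    refine ⟨0, le_rfl, fun g _ _ => ⟨MvPolynomial.C (g 0), by simpa using hm, fun x _ => ?_⟩⟩
    rw [Subsingleton.elim x 0]; simp
  | succ d ih =>
    obtain ⟨C, hC, hih⟩ := ih
    obtain ⟨W, hW, hwhit⟩ := whitney_one hm
    have hm' : (0:ℝ) < m := by exact_mod_cast hm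
    let v : ℕ → ℝ := fun i => i / m
    have hv : Set.InjOn v (Finset.range m) := by
      intro a _ b _ h
      have h : (a : ℝ) / m = b / m := h
      have : (a : ℝ) = b := by field_simp at h; linarith
      exact_mod_cast this
    have hv1 : ∀ i < m, |v i| ≤ 1 := fun i hi => by
      have : (i:ℝ) ≤ m := by exact_mod_cast hi.le
      simp only [v]
      rw [abs_of_nonneg (by positivity), div_le_one hm']; exact this
    let ℓ : ℕ → Polynomial ℝ := fun i => Lagrange.basis (range m) v i
    have hΛ : ∃ Λ : ℝ, 0 ≤ Λ ∧ ∀ t : ℝ, |t| ≤ 1 → ∑ i ∈ range m, |(ℓ i).eval t| ≤ Λ := by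
      have hcc : ContinuousOn (fun t : ℝ => ∑ i ∈ range m, |(ℓ i).eval t|) (Set.Icc (-1) 1) := by
        fun_prop
      obtain ⟨x0, hx0, hmax⟩ := isCompact_Icc.exists_isMaxOn (Set.nonempty_Icc.2 (by norm_num : (-1:ℝ) ≤ 1)) hcc
      exact ⟨_, sum_nonneg fun _ _ => abs_nonneg _, fun t ht => hmax (icc_abs.2 ht)⟩
    obtain ⟨Λ, hΛ0, hΛ⟩ := hΛ
    let L : ℕ → MvPolynomial (Fin (d + 1)) ℝ := fun i => Polynomial.aeval (MvPolynomial.X 0) (ℓ i)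
    have hL : ∀ i x, MvPolynomial.eval x (L i) = (ℓ i).eval (x 0) := by
      intro i x
      simp only [L]
      induction (ℓ i) using Polynomial.induction_on' with
      | add p q hp hq => simp [hp, hq]
      | monomial n a => simp [Polynomial.aeval_monomial]
    let D : ℕ := (∑ i ∈ range m, (L i).totalDegree) + m
    obtain ⟨C', hC', hred⟩ := reduce_degree hm (D + 1)
    refine ⟨C' * ((W + Λ * W + Λ * C) + 1), by positivity, fun g hg hd => ?_⟩
    have hcons : ∀ s : ℝ, |s| ≤ 1 → ∀ y ∈ cube (Fin d), (Fin.cons s y : Fin (d+1) → ℝ) ∈ cube (Fin (d + 1)) := by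
      intro s hs y hy i
      refine Fin.cases ?_ (fun j => ?_) i
      · simpa using hs
      · simpa using hy j
    have hT : ∀ i : ℕ, ∃ T : MvPolynomial (Fin d) ℝ, i < m → T.totalDegree < m ∧ ∀ y ∈ cube (Fin d),
        |g (Fin.cons (v i) y) - MvPolynomial.eval y T| ≤ C := by
      intro i
      by_cases hi : i < m
      · obtain ⟨T, h1, h2⟩ := hih (fun y => g (Fin.cons (v i) y))
          (hg.comp (by fun_prop) (fun y hy => hcons _ (hv1 i hi) y hy))
          (diffBound_comp hd (fun y => Fin.cons (v i) y) (fun h => Fin.cons 0 h)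
            (fun x h j => by
              ext k
              refine Fin.cases ?_ (fun k => ?_) k <;> simp)
            (fun y hy => hcons _ (hv1 i hi) y hy))
        exact ⟨T, fun _ => ⟨h1, h2⟩⟩
      · exact ⟨0, fun h => absurd h hi⟩
    choose T hT using hT
    refine hred (d + 1) g hg hd (∑ i ∈ range m, L i * MvPolynomial.rename Fin.succ (T i)) _ ?_ ?_
    · refine Nat.lt_succ_of_le (MvPolynomial.totalDegree_finsetSum_le fun i hi => ?_)
      refine (MvPolynomial.totalDegree_mul _ _).trans (add_le_add ?_ ?_)
      · exact single_le_sum (f := fun i => (L i).totalDegree) (fun _ _ => Nat.zero_le _) hi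
      · exact (MvPolynomial.totalDegree_rename_le _ _).trans (hT i (mem_range.1 hi)).1.le
    · intro z hz
      obtain ⟨x, y, rfl⟩ : ∃ (x : ℝ) (y : Fin d → ℝ), z = Fin.cons x y := ⟨z 0, Fin.tail z, by simp⟩
      have hx : |x| ≤ 1 := by simpa using hz 0
      have hy : y ∈ cube (Fin d) := fun i => by simpa using hz i.succ
      obtain ⟨q, hq, hqu⟩ := hwhit (fun t => g (Fin.cons t y))
        (hg.comp (by fun_prop) (fun t ht => hcons t (icc_abs.1 ht) y hy))
        (diffBound_comp hd (fun t => Fin.cons t y) (fun t => Fin.cons t 0)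
          (fun x h j => by
              ext k
              refine Fin.cases ?_ (fun k => ?_) k <;> simp)
          (fun t ht => hcons t (icc_abs.1 ht) y hy))
      have h1 := hqu x (icc_abs.2 hx)
      have hqe : q.eval x = ∑ i ∈ range m, q.eval (v i) * (ℓ i).eval x := by
        have hdeg : q.degree < (#(range m) : ℕ) := by
          rw [card_range]
          exact lt_of_le_of_lt Polynomial.degree_le_natDegree (by exact_mod_cast hq)
        conv_lhs => rw [Lagrange.eq_interpolate hv hdeg, Lagrange.interpolate_apply, Polynomial.eval_finsetSum]
        simp [ℓ]
      have hTe : MvPolynomial.eval (Fin.cons x y : Fin (d+1) → ℝ) (∑ i ∈ range m, L i * MvPolynomial.rename Fin.succ (T i))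
          = ∑ i ∈ range m, MvPolynomial.eval y (T i) * (ℓ i).eval x := by
        rw [map_sum]
        refine sum_congr rfl fun i _ => ?_
        rw [map_mul, hL, MvPolynomial.eval_rename, mul_comm]
        congr 2
      rw [hTe]
      have h2 : |q.eval x - ∑ i ∈ range m, MvPolynomial.eval y (T i) * (ℓ i).eval x| ≤ Λ * (W + C) := by
        rw [hqe, ← sum_sub_distrib]
        calc _ ≤ ∑ i ∈ range m, |q.eval (v i) * (ℓ i).eval x - MvPolynomial.eval y (T i) * (ℓ i).eval x| :=
              abs_sum_le_sum_abs _ _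
          _ ≤ ∑ i ∈ range m, |(ℓ i).eval x| * (W + C) := by
              refine sum_le_sum fun i hi => ?_
              have hi := mem_range.1 hi
              rw [← sub_mul, abs_mul, mul_comm]
              refine mul_le_mul_of_nonneg_left ?_ (abs_nonneg _)
              have h3 := hqu (v i) (icc_abs.2 (hv1 i hi))
              have h4 := (hT i hi).2 y hy
              rw [abs_le] at *
              constructor <;> linarith [h3.1, h3.2, h4.1, h4.2]
          _ ≤ _ := by
              rw [← sum_mul]
              exact mul_le_mul_of_nonneg_right (hΛ x hx) (by positivity)
      have h5 : Λ * (W + C) = Λ * W + Λ * C := by ring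
      rw [h5] at h2
      rw [abs_le] at *
      constructor <;> linarith [h1.1, h1.2, h2.1, h2.2]


section ball
variable {p : ℝ}

lemma ball_abs_le (hp : 0 < p) {n : ℕ} {x : Fin n → ℝ} (hx : x ∈ lpBall n p) (i : Fin n) :
    |x i| ≤ 1 := by
  by_contra h
  push Not at h
  have h1 := Real.one_lt_rpow h hp
  have h2 : |x i| ^ p ≤ ∑ j, |x j| ^ p :=
    single_le_sum (f := fun j => |x j| ^ p) (fun j _ => by positivity) (mem_univ i)
  have h3 : ∑ j, |x j| ^ p ≤ 1 := hx
  linarith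

lemma ball_mono (hp : 0 < p) {n : ℕ} {x y : Fin n → ℝ} (hx : x ∈ lpBall n p)
    (h : ∀ i, |y i| ≤ |x i|) : y ∈ lpBall n p :=
  le_trans (sum_le_sum fun i _ => Real.rpow_le_rpow (abs_nonneg _) (h i) hp.le) hx

lemma ball_smul (hp : 0 < p) {n : ℕ} {x : Fin n → ℝ} (hx : x ∈ lpBall n p) {t : ℝ} (ht : |t| ≤ 1) :
    t • x ∈ lpBall n p := by
  refine ball_mono hp hx fun i => ?_
  rw [Pi.smul_apply, smul_eq_mul, abs_mul]
  exact mul_le_of_le_one_left (abs_nonneg _) ht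

lemma ball_zero (hp : 0 < p) (n : ℕ) : (0 : Fin n → ℝ) ∈ lpBall n p := by
  show ∑ i, |(0 : Fin n → ℝ) i| ^ p ≤ 1
  simp [Real.zero_rpow hp.ne']

lemma ball_compact (hp : 0 < p) (n : ℕ) : IsCompact (lpBall n p) := by
  refine (isCompact_Icc (a := (-1 : Fin n → ℝ)) (b := 1)).of_isClosed_subset ?_ ?_
  · refine isClosed_le (continuous_finsetSum _ fun i _ => ?_) continuous_const
    exact (continuous_apply i).abs.rpow_const (fun _ => Or.inr hp.le)
  · intro x hx
    exact ⟨fun i => (abs_le.1 (ball_abs_le hp hx i)).1, fun i => (abs_le.1 (ball_abs_le hp hx i)).2⟩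

lemma small_cube (hp : 0 < p) (d : ℕ) : ∃ ρ : ℝ, 0 < ρ ∧ ρ ≤ 1 ∧
    ∀ x : Fin d → ℝ, (∀ i, |x i| ≤ ρ) → x ∈ lpBall d p := by
  have hd : (0:ℝ) < d + 1 := by positivity
  refine ⟨(1 / (d + 1 : ℝ)) ^ (1 / p), by positivity, ?_, ?_⟩
  · refine Real.rpow_le_one (by positivity) ?_ (by positivity)
    rw [div_le_one hd]; linarith [Nat.cast_nonneg (α := ℝ) d]
  · intro x hx
    show ∑ i, |x i| ^ p ≤ 1
    calc ∑ i, |x i| ^ p ≤ ∑ i : Fin d, 1 / (d + 1 : ℝ) := by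
          refine sum_le_sum fun i _ => ?_
          refine (Real.rpow_le_rpow (abs_nonneg _) (hx i) hp.le).trans ?_
          rw [← Real.rpow_mul (by positivity), one_div_mul_cancel hp.ne', Real.rpow_one]
      _ = d / (d + 1) := by rw [sum_const, card_univ, Fintype.card_fin, nsmul_eq_mul, mul_one_div]
      _ ≤ 1 := by rw [div_le_one hd]; linarith

lemma scale_poly {σ : Type*} {m : ℕ} (P : MvPolynomial σ ℝ) (hP : P.totalDegree < m) (s : ℝ) :
    ∃ Q : MvPolynomial σ ℝ, Q.totalDegree < m ∧
      ∀ x, MvPolynomial.eval x Q = MvPolynomial.eval (s • x) P := by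
  refine ⟨∑ k ∈ range (P.totalDegree + 1), MvPolynomial.C (s ^ k) * MvPolynomial.homogeneousComponent k P,
    lt_of_le_of_lt (MvPolynomial.totalDegree_finsetSum_le fun k hk => ?_) hP, fun x => ?_⟩
  · refine (MvPolynomial.totalDegree_mul _ _).trans ?_
    rw [MvPolynomial.totalDegree_C, zero_add]
    refine (MvPolynomial.homogeneousComponent_isHomogeneous k P).totalDegree_le.trans ?_
    have := mem_range.1 hk; omega
  · conv_rhs => rw [← MvPolynomial.sum_homogeneousComponent P]
    rw [map_sum, map_sum]
    refine sum_congr rfl fun k _ => ?_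
    rw [homog_eval (MvPolynomial.homogeneousComponent_isHomogeneous k P)]
    simp

lemma whitney_ball (hp : 0 < p) {m : ℕ} (hm : 0 < m) (d : ℕ) : ∃ C : ℝ, 0 ≤ C ∧
    ∀ g : (Fin d → ℝ) → ℝ, ContinuousOn g (lpBall d p) → diffBound m (lpBall d p) g 1 →
      ∃ P : MvPolynomial (Fin d) ℝ, P.totalDegree < m ∧
        ∀ x ∈ lpBall d p, |g x - MvPolynomial.eval x P| ≤ C := by
  obtain ⟨C, hC, hcube⟩ := whitney_cube hm d
  obtain ⟨W, hW, hwhit⟩ := whitney_one hm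
  obtain ⟨ρ, hρ, hρ1, hball⟩ := small_cube hp d
  have hm' : (0:ℝ) < m := by exact_mod_cast hm
  obtain ⟨C1, hC1, hcoef⟩ := coeff_bound m (ρ / m) (by positivity)
  refine ⟨W + m * 1 ^ m * (C1 * (C + W)), by positivity, fun g hg hd => ?_⟩
  have hin : ∀ x ∈ cube (Fin d), ρ • x ∈ lpBall d p := fun x hx => hball _ fun i => by
    rw [Pi.smul_apply, smul_eq_mul, abs_mul, abs_of_pos hρ]
    exact mul_le_of_le_one_right hρ.le (hx i)
  obtain ⟨P, hP, hPg⟩ := hcube (fun x => g (ρ • x)) (hg.comp (by fun_prop) hin)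
    (diffBound_comp hd (fun x => ρ • x) (fun x => ρ • x)
      (fun x h j => by rw [smul_add, smul_comm]) hin)
  obtain ⟨Q, hQ, hQe⟩ := scale_poly P hP ρ⁻¹
  refine ⟨Q, hQ, fun x hx => ?_⟩
  have hG : diffBound m (lpBall d p) (fun x => g x - MvPolynomial.eval x Q) 1 := diffBound_sub_mv hd hQ
  have hGc : ContinuousOn (fun x => g x - MvPolynomial.eval x Q) (lpBall d p) :=
    hg.sub (MvPolynomial.continuous_eval Q).continuousOn
  obtain ⟨q, hq, hqu⟩ := hwhit (fun t => g (t • x) - MvPolynomial.eval (t • x) Q)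
    (hGc.comp (by fun_prop) (fun t ht => ball_smul hp hx (icc_abs.1 ht)))
    (diffBound_comp hG (fun t => t • x) (fun t => t • x)
      (fun y h j => by simp [add_smul, mul_smul]) (fun t ht => ball_smul hp hx (icc_abs.1 ht)))
  have hc := hcoef q hq (C + W) (fun i hi => by
    have hi' : (i:ℝ) ≤ m := by exact_mod_cast hi.le
    have h0 : 0 ≤ ρ / m * i := by positivity
    have h00 : ρ / m * i ≤ ρ := by
      rw [div_mul_eq_mul_div, div_le_iff₀ hm']; gcongr
    have ht : |ρ / m * i| ≤ 1 := by rw [abs_of_nonneg h0]; linarith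
    have h1 := hqu _ (icc_abs.2 ht)
    have h2 := hPg (ρ⁻¹ • (ρ / m * i) • x) (fun j => by
      rw [Pi.smul_apply, Pi.smul_apply, smul_eq_mul, smul_eq_mul, abs_mul, abs_mul, abs_of_nonneg h0, abs_of_pos (inv_pos.2 hρ),
        ← mul_assoc]
      refine mul_le_one₀ ?_ (abs_nonneg _) (ball_abs_le hp hx j)
      rw [inv_mul_le_iff₀ hρ]; linarith)
    rw [smul_inv_smul₀ hρ.ne', ← hQe] at h2
    rw [abs_le] at *
    constructor <;> linarith [h1.1, h1.2, h2.1, h2.2])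
  have h1 := eval_bound hq le_rfl hc (t := 1) (by simp)
  have h2 := hqu 1 (by simp)
  simp only [one_smul] at h2
  rw [abs_le] at *
  constructor <;> linarith [h1.1, h1.2, h2.1, h2.2]

lemma lat_unique {d m : ℕ} {δ : ℝ} (hδ : 0 < δ) (P : MvPolynomial (Fin d) ℝ) (hP : P.totalDegree < m)
    (h : ∀ β : Fin d → ℕ, ∑ i, β i < m → MvPolynomial.eval (fun i => δ * (β i : ℝ)) P = 0) : P = 0 := by
  classical
  by_contra hne
  have hsup : P.support.Nonempty := by
    rwa [Finset.nonempty_iff_ne_empty, Ne, MvPolynomial.support_eq_empty]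
  obtain ⟨t, ht, hte⟩ := Finset.exists_mem_eq_sup P.support hsup (fun s => s.degree)
  have hte' : P.totalDegree = t.degree := hte
  obtain ⟨s, hs, hse⟩ := MvPolynomial.combinatorial_nullstellensatz_exists_eval_nonzero P t
    (MvPolynomial.mem_support_iff.1 ht) hte'
    (fun i => (range (t i + 1)).image (fun k : ℕ => δ * (k : ℝ))) (fun i => by
      rw [card_image_of_injective, card_range]; · omega
      intro a b hab
      have hab : δ * (a:ℝ) = δ * b := hab
      exact_mod_cast mul_left_cancel₀ hδ.ne' hab)
  simp only [mem_image, mem_range] at hs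
  choose β hβ hβs using hs
  refine hse ?_
  have : s = fun i => δ * (β i : ℝ) := funext fun i => (hβs i).symm
  rw [this]
  refine h β (lt_of_le_of_lt ?_ hP)
  rw [hte', Finsupp.degree_eq_sum]
  exact sum_le_sum fun i _ => by have := hβ i; omega

lemma lat_interp {d m : ℕ} (hm : 0 < m) {δ : ℝ} (hδ : 0 < δ) (val : (Fin d → ℕ) → ℝ) :
    ∃ P : MvPolynomial (Fin d) ℝ, P.totalDegree < m ∧
      ∀ β : Fin d → ℕ, ∑ i, β i < m → MvPolynomial.eval (fun i => δ * (β i : ℝ)) P = val β := by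
  classical
  let I := {β : Fin d → Fin m // ∑ i, (β i : ℕ) < m}
  let e : I → (Fin d →₀ ℕ) := fun β => Finsupp.equivFunOnFinite.symm (fun i => (β.1 i : ℕ))
  have he : Function.Injective e := by
    intro a b hab
    have h1 := Finsupp.equivFunOnFinite.symm.injective hab
    ext i
    exact congrFun h1 i
  let Pc : (I → ℝ) →ₗ[ℝ] MvPolynomial (Fin d) ℝ := ∑ β : I, (MvPolynomial.monomial (e β)).comp (LinearMap.proj β)
  have hPc : ∀ c, Pc c = ∑ β : I, MvPolynomial.monomial (e β) (c β) := fun c => by simp [Pc]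
  have hdeg : ∀ c, (Pc c).totalDegree < m := by
    intro c
    rw [hPc]
    refine lt_of_le_of_lt (MvPolynomial.totalDegree_finsetSum_le (d := m - 1) fun β _ => ?_) (by omega)
    refine (MvPolynomial.totalDegree_monomial_le _ _).trans ?_
    have : (e β).degree = ∑ i, (β.1 i : ℕ) := by rw [Finsupp.degree_eq_sum]; rfl
    have h2 := β.2
    show (e β).degree ≤ _
    omega
  let M : (I → ℝ) →ₗ[ℝ] (I → ℝ) :=
    LinearMap.pi fun β => ((MvPolynomial.aeval (fun i => δ * ((β.1 i : ℕ) : ℝ))).toLinearMap).comp Pc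
  have hM : ∀ c β, M c β = MvPolynomial.eval (fun i => δ * ((β.1 i : ℕ) : ℝ)) (Pc c) := by
    intro c β
    simp [M, MvPolynomial.aeval_eq_eval]
  have lift : ∀ β : Fin d → ℕ, ∑ i, β i < m → ∃ b : I, ∀ i, (b.1 i : ℕ) = β i := by
    intro β hβ
    have hlt : ∀ i, β i < m := fun i =>
      lt_of_le_of_lt (single_le_sum (f := β) (fun _ _ => Nat.zero_le _) (mem_univ i)) hβ
    exact ⟨⟨fun i => ⟨β i, hlt i⟩, hβ⟩, fun i => rfl⟩
  have hinj : Function.Injective M := by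
    rw [injective_iff_map_eq_zero]
    intro c hc
    have h0 : Pc c = 0 := by
      refine lat_unique hδ (Pc c) (hdeg c) fun β hβ => ?_
      obtain ⟨b, hb⟩ := lift β hβ
      have := congrFun hc b
      rw [hM] at this
      simpa only [hb, Pi.zero_apply] using this
    ext b
    have h1 := congrArg (MvPolynomial.coeff (e b)) h0
    rw [hPc, MvPolynomial.coeff_sum] at h1
    rw [Finset.sum_eq_single b (fun a _ hab => by
      rw [MvPolynomial.coeff_monomial, if_neg (fun h => hab (he h))])
      (fun h => absurd (mem_univ _) h), MvPolynomial.coeff_monomial, if_pos rfl] at h1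
    exact h1
  obtain ⟨c, hc⟩ := LinearMap.injective_iff_surjective.1 hinj (fun b => val (fun i => (b.1 i : ℕ)))
  refine ⟨Pc c, hdeg c, fun β hβ => ?_⟩
  obtain ⟨b, hb⟩ := lift β hβ
  have := congrFun hc b
  rw [hM] at this
  simpa only [hb] using this

lemma lat_stab (d : ℕ) {m : ℕ} (hm : 0 < m) {δ : ℝ} (hδ : 0 < δ) : ∃ C : ℝ, 0 ≤ C ∧
    ∀ P : MvPolynomial (Fin d) ℝ, P.totalDegree < m → ∀ B : ℝ,
      (∀ β : Fin d → ℕ, ∑ i, β i < m → |MvPolynomial.eval (fun i => δ * (β i : ℝ)) P| ≤ B) →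
      ∀ x ∈ cube (Fin d), |MvPolynomial.eval x P| ≤ C * B := by
  classical
  let J : Finset (Fin d → ℕ) := (Fintype.piFinset fun _ => range m).filter (fun β => ∑ i, β i < m)
  have hJ : ∀ β, β ∈ J ↔ ∑ i, β i < m := by
    intro β
    simp only [J, mem_filter, Fintype.mem_piFinset, mem_range, and_iff_right_iff_imp]
    intro hβ i
    exact lt_of_le_of_lt (single_le_sum (f := β) (fun _ _ => Nat.zero_le _) (mem_univ i)) hβ
  choose b hbd hb using fun γ : Fin d → ℕ => lat_interp hm hδ (fun β => if β = γ then (1:ℝ) else 0)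
  have hcc : Continuous (fun x : Fin d → ℝ => ∑ γ ∈ J, |MvPolynomial.eval x (b γ)|) :=
    continuous_finsetSum _ fun γ _ => (MvPolynomial.continuous_eval (b γ)).abs
  obtain ⟨x0, hx0, hmax⟩ := (isCompact_Icc (a := (-1 : Fin d → ℝ)) (b := 1)).exists_isMaxOn
    ⟨0, by constructor <;> intro i <;> simp⟩ hcc.continuousOn
  refine ⟨∑ γ ∈ J, |MvPolynomial.eval x0 (b γ)|, sum_nonneg (fun _ _ => abs_nonneg _), fun P hP B hB x hx => ?_⟩
  have hB0 : 0 ≤ B := (abs_nonneg _).trans (hB 0 (by simpa using hm))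
  have hPe : P = ∑ γ ∈ J, MvPolynomial.C (MvPolynomial.eval (fun i => δ * (γ i : ℝ)) P) * b γ := by
    rw [← sub_eq_zero]
    refine lat_unique (m := m) hδ _ ?_ ?_
    · refine lt_of_le_of_lt (MvPolynomial.totalDegree_sub _ _) (max_lt hP ?_)
      refine lt_of_le_of_lt (MvPolynomial.totalDegree_finsetSum_le (d := m - 1) fun γ _ => ?_) (by omega)
      refine (MvPolynomial.totalDegree_mul _ _).trans ?_
      rw [MvPolynomial.totalDegree_C, zero_add]
      have := hbd γ; omega
    · intro β hβ
      rw [map_sub, map_sum]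
      have : ∀ γ ∈ J, MvPolynomial.eval (fun i => δ * (β i : ℝ))
          (MvPolynomial.C (MvPolynomial.eval (fun i => δ * (γ i : ℝ)) P) * b γ) =
          if β = γ then MvPolynomial.eval (fun i => δ * (γ i : ℝ)) P else 0 := by
        intro γ _
        rw [map_mul, hb γ β hβ, MvPolynomial.eval_C]; simp
      rw [sum_congr rfl this, sum_ite_eq, if_pos ((hJ β).2 hβ), sub_self]
  rw [hPe, map_sum]
  calc _ ≤ ∑ γ ∈ J, |MvPolynomial.eval x (MvPolynomial.C (MvPolynomial.eval (fun i => δ * (γ i : ℝ)) P) * b γ)| :=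
        abs_sum_le_sum_abs _ _
    _ ≤ ∑ γ ∈ J, |MvPolynomial.eval x (b γ)| * B := by
        refine sum_le_sum fun γ hγ => ?_
        rw [map_mul, MvPolynomial.eval_C, abs_mul, mul_comm]
        exact mul_le_mul_of_nonneg_left (hB γ ((hJ γ).1 hγ)) (abs_nonneg _)
    _ = (∑ γ ∈ J, |MvPolynomial.eval x (b γ)|) * B := by rw [sum_mul]
    _ ≤ _ := by
        refine mul_le_mul_of_nonneg_right ?_ hB0
        exact hmax (show x ∈ Set.Icc (-1) 1 from
          ⟨fun i => (abs_le.1 (hx i)).1, fun i => (abs_le.1 (hx i)).2⟩)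



lemma lat_mem (hp : 0 < p) (hp1 : p < 1) {m : ℕ} (hm : 0 < m) : ∃ δ : ℝ, 0 < δ ∧
    ∀ (n : ℕ) (β : Fin n → ℕ), ∑ i, β i < m → (fun i => δ * (β i : ℝ)) ∈ lpBall n p := by
  have hm' : (0:ℝ) < m := by exact_mod_cast hm
  refine ⟨(1 / (m : ℝ)) ^ (1 / p), by positivity, fun n β hβ => ?_⟩
  show ∑ i, |(1 / (m : ℝ)) ^ (1 / p) * (β i : ℝ)| ^ p ≤ 1
  calc ∑ i, |(1 / (m : ℝ)) ^ (1 / p) * (β i : ℝ)| ^ p ≤ ∑ i, 1 / (m : ℝ) * (β i : ℝ) := by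
        refine sum_le_sum fun i _ => ?_
        rw [abs_of_nonneg (by positivity), Real.mul_rpow (by positivity) (by positivity),
          ← Real.rpow_mul (by positivity), one_div_mul_cancel hp.ne', Real.rpow_one]
        refine mul_le_mul_of_nonneg_left ?_ (by positivity)
        rcases Nat.eq_zero_or_pos (β i) with h | h
        · rw [h]; simp [Real.zero_rpow hp.ne']
        · have h1 : (1:ℝ) ≤ β i := by exact_mod_cast h
          calc (β i : ℝ) ^ p ≤ (β i : ℝ) ^ (1:ℝ) := Real.rpow_le_rpow_of_exponent_le h1 hp1.le
            _ = β i := Real.rpow_one _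
    _ = 1 / (m : ℝ) * ((∑ i, β i : ℕ) : ℝ) := by rw [← mul_sum]; push_cast; rfl
    _ ≤ 1 := by
        rw [one_div_mul_eq_div, div_le_one hm']
        exact_mod_cast hβ.le

lemma finite_bound (hp : 0 < p) {m : ℕ} (hm : 0 < m) {δ : ℝ} (hδ : 0 < δ)
    (hlat : ∀ (n : ℕ) (β : Fin n → ℕ), ∑ i, β i < m → (fun i => δ * (β i : ℝ)) ∈ lpBall n p)
    (d : ℕ) : ∃ C : ℝ, 0 ≤ C ∧
    ∀ g : (Fin d → ℝ) → ℝ, ContinuousOn g (lpBall d p) → diffBound m (lpBall d p) g 1 →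
      (∀ β : Fin d → ℕ, ∑ i, β i < m → g (fun i => δ * (β i : ℝ)) = 0) →
      ∀ x ∈ lpBall d p, |g x| ≤ C := by
  obtain ⟨w, hw, hball⟩ := whitney_ball hp hm d
  obtain ⟨C, hC, hst⟩ := lat_stab d hm hδ
  refine ⟨w + C * w, by positivity, fun g hg hd h0 x hx => ?_⟩
  obtain ⟨P, hP, hPg⟩ := hball g hg hd
  have h1 := hst P hP w (fun β hβ => by
    have := hPg _ (hlat d β hβ)
    rwa [h0 β hβ, zero_sub, abs_neg] at this) x (fun i => ball_abs_le hp hx i)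
  have h2 := hPg x hx
  rw [abs_le] at *
  constructor <;> linarith [h1.1, h1.2, h2.1, h2.2]

lemma support_bound (hp : 0 < p) {m : ℕ} (hm : 0 < m) {δ : ℝ} (hδ : 0 < δ)
    (hlat : ∀ (n : ℕ) (β : Fin n → ℕ), ∑ i, β i < m → (fun i => δ * (β i : ℝ)) ∈ lpBall n p)
    (L : ℕ) : ∃ C : ℝ, 0 ≤ C ∧
    ∀ (n : ℕ) (g : (Fin n → ℝ) → ℝ), ContinuousOn g (lpBall n p) → diffBound m (lpBall n p) g 1 →
      (∀ β : Fin n → ℕ, ∑ i, β i < m → g (fun i => δ * (β i : ℝ)) = 0) →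
      ∀ (S : Finset (Fin n)), S.card ≤ L → ∀ z ∈ lpBall n p, (∀ i, i ∉ S → z i = 0) → |g z| ≤ C := by
  choose C hC hb using finite_bound hp hm hδ hlat
  refine ⟨∑ k ∈ range (L + 1), C k, sum_nonneg fun k _ => hC k, fun n g hg hd h0 S hS z hz hzS => ?_⟩
  refine le_trans ?_ (single_le_sum (f := C) (fun k _ => hC k) (mem_range.2 (Nat.lt_succ_of_le hS)))
  let u := S.orderEmbOfFin rfl
  have hu : Function.Injective u := u.injective
  have hr : ∀ i, i ∉ S → ¬ ∃ l, u l = i := by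
    rintro i hi ⟨l, rfl⟩
    exact hi (S.orderEmbOfFin_mem rfl l)
  have hr' : ∀ i, i ∈ S → ∃ l, u l = i := by
    intro i hi
    have : i ∈ Set.range (S.orderEmbOfFin rfl) := by rw [Finset.range_orderEmbOfFin]; exact hi
    exact this
  let Y : (Fin S.card → ℝ) → (Fin n → ℝ) := fun τ => Function.extend u τ 0
  have Y1 : ∀ τ l, Y τ (u l) = τ l := fun τ l => hu.extend_apply _ _ _
  have Y2 : ∀ τ i, i ∉ S → Y τ i = 0 := fun τ i hi => Function.extend_apply' _ _ _ (hr i hi)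
  have hYball : ∀ τ ∈ lpBall S.card p, Y τ ∈ lpBall n p := by
    intro τ hτ
    show ∑ i, |Y τ i| ^ p ≤ 1
    rw [← Fintype.sum_of_injective u hu (fun l => |τ l| ^ p) _ ?_ ?_]
    · exact hτ
    · intro i hi
      rw [Y2 τ i fun h => hi (hr' i h)]
      simp [Real.zero_rpow hp.ne']
    · intro l; rw [Y1]
  have hYc : Continuous Y := by
    refine continuous_pi fun i => ?_
    by_cases hi : i ∈ S
    · obtain ⟨l, rfl⟩ := hr' i hi
      simp only [Y1]; fun_prop
    · simp only [Y2 _ i hi]; fun_prop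
  have hYd := diffBound_comp (K' := lpBall S.card p) hd Y Y (fun x h j => by
    funext i
    rw [Pi.add_apply, Pi.smul_apply]
    by_cases hi : i ∈ S
    · obtain ⟨l, rfl⟩ := hr' i hi
      simp only [Y1]; simp
    · simp only [Y2 _ i hi]; simp) hYball
  have hz' : Y (fun l => z (u l)) = z := by
    funext i
    by_cases hi : i ∈ S
    · obtain ⟨l, rfl⟩ := hr' i hi
      rw [Y1]
    · rw [Y2 _ i hi, hzS i hi]
  have key := hb S.card (fun τ => g (Y τ)) (hg.comp hYc.continuousOn hYball) hYd (fun β hβ => by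
    have hs : ∑ i, Function.extend u β 0 i = ∑ l, β l :=
      (Fintype.sum_of_injective u hu β (Function.extend u β 0)
        (fun i hi => Function.extend_apply' _ _ _ hi)
        (fun l => (hu.extend_apply _ _ _).symm)).symm
    have := h0 (Function.extend u β 0) (hs ▸ hβ)
    rw [← this]
    congr 1
    funext i
    by_cases hi : i ∈ S
    · obtain ⟨l, rfl⟩ := hr' i hi
      rw [Y1, hu.extend_apply]
    · rw [Y2 _ i hi, Function.extend_apply' _ _ _ (hr i hi)]; simp) (fun l => z (u l)) (by
      show ∑ l, |z (u l)| ^ p ≤ 1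
      rw [Fintype.sum_of_injective u hu (fun l => |z (u l)| ^ p) (fun i => |z i| ^ p) ?_ (fun _ => rfl)]
      · exact hz
      · intro i hi
        have : i ∉ S := fun h => hi (hr' i h)
        simp [hzS i this, Real.zero_rpow hp.ne'])
  simpa only [hz'] using key

lemma lip_ball (hp : 0 < p) {m : ℕ} (hm : 0 < m) : ∃ C : ℝ, 0 ≤ C ∧
    ∀ (d : ℕ) (ψ : MvPolynomial (Fin d) ℝ), ψ.totalDegree < m → ∀ B : ℝ,
      (∀ x ∈ lpBall d p, |MvPolynomial.eval x ψ| ≤ B) →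
      ∀ t ∈ lpBall d p, ∀ V : Finset (Fin d),
        |MvPolynomial.eval t ψ - MvPolynomial.eval (fun i => if i ∈ V then 0 else t i) ψ|
          ≤ C * B * ∑ i ∈ V, |t i| := by
  have hm' : (0:ℝ) < m := by exact_mod_cast hm
  obtain ⟨C, hC, hcoef⟩ := coeff_bound m (1 / m) (by positivity)
  have hnode : ∀ i : ℕ, i < m → |1 / (m:ℝ) * i| ≤ 1 := fun i hi => by
    rw [abs_of_nonneg (by positivity), one_div_mul_eq_div, div_le_one hm']
    exact_mod_cast hi.le
  let R : ℝ := 2 ^ (1 / p)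
  have hR : 1 ≤ R := Real.one_le_rpow (by norm_num) (by positivity)
  have hR0 : 0 < R := by linarith
  refine ⟨m * (C * (m * R ^ m * C)), by positivity, fun d ψ hψ B hB t ht V => ?_⟩
  have hbig : ∀ y : Fin d → ℝ, ∑ i, |y i| ^ p ≤ 2 → |MvPolynomial.eval y ψ| ≤ m * R ^ m * (C * B) := by
    intro y hy
    have hy' : R⁻¹ • y ∈ lpBall d p := by
      show ∑ i, |(R⁻¹ • y) i| ^ p ≤ 1
      have : ∀ i, |(R⁻¹ • y) i| ^ p = 2⁻¹ * |y i| ^ p := by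
        intro i
        rw [Pi.smul_apply, smul_eq_mul, abs_mul, Real.mul_rpow (abs_nonneg _) (abs_nonneg _),
          abs_of_pos (inv_pos.2 hR0), Real.inv_rpow hR0.le, ← Real.rpow_mul (by norm_num),
          one_div_mul_cancel hp.ne', Real.rpow_one]
      simp only [this]
      rw [← mul_sum]; linarith
    obtain ⟨q, hq, hqe⟩ := line_poly ψ 0 (R⁻¹ • y)
    have hq' := lt_of_le_of_lt hq hψ
    have hc := hcoef q hq' B (fun i hi => by
      rw [hqe, zero_add]
      exact hB _ (ball_smul hp hy' (hnode i hi)))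
    have := eval_bound hq' hR hc (t := R) (abs_of_pos hR0).le
    rwa [hqe, zero_add, smul_inv_smul₀ hR0.ne'] at this
  have hone : ∀ τ ∈ lpBall d p, ∀ l, |MvPolynomial.eval τ ψ - MvPolynomial.eval (Function.update τ l 0) ψ| ≤
      m * (C * (m * R ^ m * (C * B))) * |τ l| := by
    intro τ hτ l
    obtain ⟨q, hq, hqe⟩ := line_poly ψ (Function.update τ l 0) (Pi.single l 1)
    have hq' := lt_of_le_of_lt hq hψ
    have hup : ∀ r : ℝ, Function.update τ l 0 + r • Pi.single l 1 = Function.update τ l r := by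
      intro r; funext i
      by_cases hi : i = l
      · subst hi; simp
      · simp [hi]
    have hc := hcoef q hq' _ (fun i hi => by
      rw [hqe, hup]
      refine hbig _ ?_
      calc ∑ j, |Function.update τ l (1 / (m:ℝ) * i) j| ^ p
          ≤ ∑ j, (|τ j| ^ p + if j = l then 1 else 0) := by
            refine sum_le_sum fun j _ => ?_
            by_cases hj : j = l
            · subst hj
              have h1 : |1 / (m:ℝ) * i| ^ p ≤ 1 := Real.rpow_le_one (abs_nonneg _) (hnode i hi) hp.le
              have h2 : 0 ≤ |τ j| ^ p := by positivity
              rw [Function.update_self, if_pos rfl]; linarith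
            · simp [hj]
        _ ≤ 2 := by
            rw [sum_add_distrib, sum_ite_eq' univ l, if_pos (mem_univ l)]
            have : ∑ j, |τ j| ^ p ≤ 1 := hτ
            linarith)
    have := lip_bound hq' hc (ball_abs_le hp hτ l)
    rwa [hqe, hqe, hup, hup, Function.update_eq_self] at this
  have hrw : (m:ℝ) * (C * (m * R ^ m * C)) * B = m * (C * (m * R ^ m * (C * B))) := by ring
  rw [hrw]
  induction V using Finset.induction_on with
  | empty => simp
  | insert l V hl ih =>
    have hτ : (fun i => if i ∈ V then 0 else t i) ∈ lpBall d p := ball_mono hp ht fun i => by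
      split_ifs
      · simp
      · rfl
    have h1 := hone _ hτ l
    have h2 : Function.update (fun i => if i ∈ V then 0 else t i) l 0 =
        fun i => if i ∈ insert l V then 0 else t i := by
      funext i
      by_cases hi : i = l
      · subst hi; simp
      · simp [hi]
    rw [h2] at h1
    simp only [if_neg hl] at h1
    rw [sum_insert hl]
    refine (abs_sub_le _ _ _).trans ((add_le_add ih h1).trans (le_of_eq ?_))
    ring

lemma bins {ι : Type*} {L : ℕ} (hL : 0 < L) (s : Finset ι) (w : ι → ℝ)
    (hw : ∀ i ∈ s, 0 ≤ w i ∧ w i ≤ 1 / L) (hs : ∑ i ∈ s, w i ≤ 1) :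
    ∃ b : ι → Fin L, ∀ l, ∑ i ∈ s with b i = l, w i ≤ 2 / L := by
  classical
  have hL' : (0:ℝ) < L := by exact_mod_cast hL
  induction s using Finset.induction_on with
  | empty => exact ⟨fun _ => ⟨0, hL⟩, fun l => by simp; positivity⟩
  | insert a s ha ih =>
    rw [sum_insert ha] at hs
    have ha0 := hw a (mem_insert_self _ _)
    obtain ⟨b, hb⟩ := ih (fun i hi => hw i (mem_insert_of_mem hi)) (by linarith)
    obtain ⟨l0, hl0⟩ : ∃ l0, ∑ i ∈ s with b i = l0, w i ≤ 1 / L := by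
      by_contra hcon
      push Not at hcon
      have h1 : ∑ l : Fin L, (1 / (L:ℝ)) < ∑ l : Fin L, ∑ i ∈ s with b i = l, w i :=
        sum_lt_sum_of_nonempty ⟨⟨0, hL⟩, mem_univ _⟩ fun l _ => hcon l
      rw [Finset.sum_fiberwise, sum_const, card_univ, Fintype.card_fin, nsmul_eq_mul,
        mul_one_div_cancel hL'.ne'] at h1
      linarith [ha0.1]
    refine ⟨Function.update b a l0, fun l => ?_⟩
    have hfe : ∀ l, (s.filter fun i => Function.update b a l0 i = l) = s.filter fun i => b i = l := by
      intro l
      refine filter_congr fun i hi => ?_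
      rw [Function.update_of_ne (by rintro rfl; exact ha hi)]
    rw [filter_insert, Function.update_self]
    split_ifs with h
    · subst h
      rw [sum_insert (by simp [ha]), hfe]
      have : (2:ℝ) / L = 1 / L + 1 / L := by ring
      linarith [ha0.2]
    · rw [hfe]; exact hb l


lemma blocks (hp : 0 < p) (hp1 : p < 1) {L : ℕ} (hL : 0 < L) {n : ℕ} {x : Fin n → ℝ}
    (hx : x ∈ lpBall n p) :
    ∃ (S : Finset (Fin n)) (y : Fin n → ℝ) (b : Fin n → Fin (L + 1)) (t : Fin (L + 1) → ℝ),
      S.card ≤ L ∧ t ∈ lpBall (L + 1) p ∧ (∀ i, t (b i) * y i = x i) ∧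
      (∀ τ ∈ lpBall (L + 1) p, (fun i => τ (b i) * y i) ∈ lpBall n p) ∧
      (∀ i, i ∉ S → b i ≠ 0) ∧
      ∑ l ∈ univ.erase 0, |t l| ≤ (2 / (L:ℝ)) ^ (1 / p - 1) := by
  classical
  have hL' : (0:ℝ) < L := by exact_mod_cast hL
  have hx1 : ∑ i, |x i| ^ p ≤ 1 := hx
  have hw0 : ∀ i, 0 ≤ |x i| ^ p := fun i => by positivity
  let S : Finset (Fin n) := univ.filter fun i => 1 / (L:ℝ) < |x i| ^ p
  have hScard : S.card ≤ L := by
    have h1 : (S.card : ℝ) * (1 / L) ≤ 1 := by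
      calc (S.card : ℝ) * (1 / L) = ∑ i ∈ S, 1 / (L:ℝ) := by rw [sum_const, nsmul_eq_mul]
        _ ≤ ∑ i ∈ S, |x i| ^ p := sum_le_sum fun i hi => (mem_filter.1 hi).2.le
        _ ≤ ∑ i, |x i| ^ p := sum_le_sum_of_subset_of_nonneg (subset_univ _) fun i _ _ => hw0 i
        _ ≤ 1 := hx1
    rw [mul_one_div, div_le_one hL'] at h1
    exact_mod_cast h1
  obtain ⟨c, hc⟩ := bins hL (univ.filter fun i => i ∉ S) (fun i => |x i| ^ p)
    (fun i hi => ⟨hw0 i, by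
      have h1 := (mem_filter.1 hi).2
      by_contra h
      push Not at h
      exact h1 (mem_filter.2 ⟨mem_univ _, h⟩)⟩)
    ((sum_le_sum_of_subset_of_nonneg (subset_univ _) fun i _ _ => hw0 i).trans hx1)
  let b : Fin n → Fin (L + 1) := fun i => if i ∈ S then 0 else (c i).succ
  let M : Fin (L + 1) → ℝ := fun l => ∑ i with b i = l, |x i| ^ p
  have hM0 : ∀ l, 0 ≤ M l := fun l => sum_nonneg fun i _ => hw0 i
  have hMs : ∑ l, M l = ∑ i, |x i| ^ p := Finset.sum_fiberwise _ _ _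
  have hM2 : ∀ l, l ≠ 0 → M l ≤ 2 / L := by
    intro l hl
    obtain ⟨k, rfl⟩ := Fin.exists_succ_eq.2 hl
    refine le_trans (le_of_eq ?_) (hc k)
    show ∑ i with b i = k.succ, |x i| ^ p = _
    rw [filter_filter]
    refine sum_congr (filter_congr fun i _ => ?_) fun _ _ => rfl
    show (if i ∈ S then 0 else (c i).succ) = k.succ ↔ _
    split_ifs with h
    · simp [h, (Fin.succ_ne_zero k).symm]
    · simp [h]
  have hpow : ∀ a : ℝ, 0 ≤ a → (a ^ (1 / p)) ^ p = a := fun a ha => by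
    rw [← Real.rpow_mul ha, one_div_mul_cancel hp.ne', Real.rpow_one]
  have hMi : ∀ i, |x i| ^ p ≤ M (b i) := fun i =>
    single_le_sum (f := fun i => |x i| ^ p) (fun j _ => hw0 j) (mem_filter.2 ⟨mem_univ i, rfl⟩)
  refine ⟨S, fun i => x i / (M (b i)) ^ (1 / p), b, fun l => (M l) ^ (1 / p), hScard, ?_, ?_, ?_, ?_, ?_⟩
  · show ∑ l, |(M l) ^ (1 / p)| ^ p ≤ 1
    have : ∀ l, |(M l) ^ (1 / p)| ^ p = M l := fun l => by
      rw [abs_of_nonneg (Real.rpow_nonneg (hM0 l) _), hpow _ (hM0 l)]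
    simp only [this]
    rw [hMs]; exact hx1
  · intro i
    rcases (hM0 (b i)).eq_or_lt with h | h
    · have h1 : |x i| ^ p = 0 := le_antisymm (h ▸ hMi i) (hw0 i)
      have h2 : x i = 0 := abs_eq_zero.1 ((Real.rpow_eq_zero (abs_nonneg _) hp.ne').1 h1)
      show _ * (x i / _) = x i
      rw [h2, zero_div, mul_zero]
    · have : (M (b i)) ^ (1 / p) ≠ 0 := (Real.rpow_pos_of_pos h _).ne'
      field_simp
  · intro τ hτ
    show ∑ i, |τ (b i) * (x i / (M (b i)) ^ (1 / p))| ^ p ≤ 1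
    have h1 : ∀ i, |τ (b i) * (x i / (M (b i)) ^ (1 / p))| ^ p = |τ (b i)| ^ p * (|x i| ^ p / M (b i)) := by
      intro i
      rw [abs_mul, abs_div, Real.mul_rpow (abs_nonneg _) (by positivity),
        Real.div_rpow (abs_nonneg _) (abs_nonneg _), abs_of_nonneg (Real.rpow_nonneg (hM0 _) _), hpow _ (hM0 _)]
    simp only [h1]
    rw [← Finset.sum_fiberwise _ b]
    refine le_trans (sum_le_sum fun l _ => ?_) hτ
    calc ∑ i with b i = l, |τ (b i)| ^ p * (|x i| ^ p / M (b i))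
        = ∑ i with b i = l, |τ l| ^ p / M l * |x i| ^ p := by
          refine sum_congr rfl fun i hi => ?_
          rw [(mem_filter.1 hi).2]; ring
      _ = |τ l| ^ p / M l * M l := by rw [← mul_sum]
      _ ≤ |τ l| ^ p := by
          rcases (hM0 l).eq_or_lt with h | h
          · rw [← h, mul_zero]; positivity
          · rw [div_mul_cancel₀ _ h.ne']
  · intro i hi
    show (if i ∈ S then 0 else (c i).succ) ≠ 0
    rw [if_neg hi]; exact Fin.succ_ne_zero _
  · have he : 0 < 1 / p - 1 := by
      have : 1 < 1 / p := by rw [lt_div_iff₀ hp]; linarith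
      linarith
    have hε : 0 ≤ (2 / (L:ℝ)) ^ (1 / p - 1) := by positivity
    calc ∑ l ∈ univ.erase 0, |(M l) ^ (1 / p)|
        ≤ ∑ l ∈ univ.erase 0, (2 / (L:ℝ)) ^ (1 / p - 1) * M l := by
          refine sum_le_sum fun l hl => ?_
          rw [abs_of_nonneg (Real.rpow_nonneg (hM0 l) _)]
          have h2 : (M l) ^ (1 / p) = (M l) ^ (1 / p - 1) * M l := by
            conv_lhs => rw [show 1 / p = (1 / p - 1) + 1 by ring]
            rw [Real.rpow_add_one' (hM0 l) (by positivity)]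
          rw [h2]
          exact mul_le_mul_of_nonneg_right
            (Real.rpow_le_rpow (hM0 l) (hM2 l (ne_of_mem_erase hl)) he.le) (hM0 l)
      _ = (2 / (L:ℝ)) ^ (1 / p - 1) * ∑ l ∈ univ.erase 0, M l := by rw [mul_sum]
      _ ≤ (2 / (L:ℝ)) ^ (1 / p - 1) * 1 := by
          refine mul_le_mul_of_nonneg_left ?_ hε
          refine le_trans (sum_le_sum_of_subset_of_nonneg (subset_univ _) fun l _ _ => hM0 l) ?_
          rw [hMs]; exact hx1
      _ = _ := mul_one _

lemma choose_L (hp : 0 < p) (hp1 : p < 1) (C : ℝ) : ∃ L : ℕ, 0 < L ∧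
    C * (2 / (L:ℝ)) ^ (1 / p - 1) ≤ 1 / 2 := by
  have he : 0 < 1 / p - 1 := by
    have : 1 < 1 / p := by rw [lt_div_iff₀ hp]; linarith
    linarith
  have h1 : Filter.Tendsto (fun L : ℕ => C * (2 / (L:ℝ)) ^ (1 / p - 1)) Filter.atTop (nhds (C * 0 ^ (1 / p - 1))) :=
    ((tendsto_const_div_atTop_nhds_zero_nat 2).rpow_const (Or.inr he.le)).const_mul C
  rw [Real.zero_rpow he.ne', mul_zero] at h1
  have h2 := h1.eventually_le_const (show (0:ℝ) < 1 / 2 by norm_num)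
  obtain ⟨L, hL, hL2⟩ := (h2.and (Filter.eventually_gt_atTop 0)).exists
  exact ⟨L, hL2, hL⟩

theorem main_bound (hp : 0 < p) (hp1 : p < 1) {m : ℕ} (hm : 0 < m) :
    ∃ C : ℝ, ∀ n : ℕ, ∀ f : (Fin n → ℝ) → ℝ, ContinuousOn f (lpBall n p) → diffBound m (lpBall n p) f 1 →
        ∃ P : MvPolynomial (Fin n) ℝ, P.totalDegree < m ∧
          ∀ x ∈ lpBall n p, |f x - MvPolynomial.eval x P| ≤ C := by
  obtain ⟨δ, hδ, hlat⟩ := lat_mem hp hp1 hm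
  obtain ⟨C2, hC2, hlip⟩ := lip_ball hp hm
  obtain ⟨L, hL, hLe⟩ := choose_L hp hp1 C2
  obtain ⟨CL, hCL, hsup⟩ := support_bound hp hm hδ hlat L
  obtain ⟨w, hw, hwb⟩ := whitney_ball hp hm (L + 1)
  refine ⟨2 * (2 * w + CL + w), fun n f hf hd => ?_⟩
  obtain ⟨φ, hφ, hφe⟩ := lat_interp hm hδ (fun β : Fin n → ℕ => f (fun i => δ * (β i : ℝ)))
  refine ⟨φ, hφ, ?_⟩
  let g : (Fin n → ℝ) → ℝ := fun x => f x - MvPolynomial.eval x φ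
  have hgd : diffBound m (lpBall n p) g 1 := diffBound_sub_mv hd hφ
  have hgc : ContinuousOn g (lpBall n p) := hf.sub (MvPolynomial.continuous_eval φ).continuousOn
  have hg0 : ∀ β : Fin n → ℕ, ∑ i, β i < m → g (fun i => δ * (β i : ℝ)) = 0 := fun β hβ => by
    show f _ - _ = 0
    rw [hφe β hβ, sub_self]
  obtain ⟨x, hx, hmax⟩ := (ball_compact hp n).exists_isMaxOn ⟨0, ball_zero hp n⟩ hgc.abs
  suffices h : |g x| ≤ 2 * (2 * w + CL + w) from fun z hz => le_trans (hmax hz) h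
  obtain ⟨S, y, b, t, hS, ht, htx, hY, hbS, hsum⟩ := blocks hp hp1 hL hx
  let Y : (Fin (L + 1) → ℝ) → (Fin n → ℝ) := fun τ i => τ (b i) * y i
  have hYc : Continuous Y := by
    refine continuous_pi fun i => ?_
    show Continuous fun τ : Fin (L + 1) → ℝ => τ (b i) * y i
    fun_prop
  obtain ⟨ψ, hψ, hψg⟩ := hwb (fun τ => g (Y τ)) (hgc.comp hYc.continuousOn hY)
    (diffBound_comp hgd Y Y (fun a h j => by
      funext i
      show (a (b i) + (j:ℝ) * h (b i)) * y i = a (b i) * y i + (j:ℝ) * (h (b i) * y i)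
      ring) hY)
  have hψB : ∀ τ ∈ lpBall (L + 1) p, |MvPolynomial.eval τ ψ| ≤ |g x| + w := by
    intro τ hτ
    have h1 := hψg τ hτ
    have h2 : |g (Y τ)| ≤ |g x| := hmax (hY τ hτ)
    have h3 := abs_sub_abs_le_abs_sub (MvPolynomial.eval τ ψ) (g (Y τ))
    rw [abs_sub_comm (MvPolynomial.eval τ ψ) (g (Y τ))] at h3
    linarith
  have hl := hlip (L + 1) ψ hψ _ hψB t ht (univ.erase 0)
  set tU : Fin (L + 1) → ℝ := fun i => if i ∈ univ.erase (0 : Fin (L + 1)) then 0 else t i with htU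
  have htUb : tU ∈ lpBall (L + 1) p := ball_mono hp ht fun i => by
    show |if i ∈ univ.erase (0 : Fin (L + 1)) then 0 else t i| ≤ _
    split_ifs
    · simp
    · rfl
  have hgU := hsup n g hgc hgd hg0 S hS (Y tU) (hY _ htUb) (fun i hi => by
    show (if b i ∈ univ.erase (0 : Fin (L + 1)) then 0 else t (b i)) * y i = 0
    rw [if_pos (mem_erase.2 ⟨hbS i hi, mem_univ _⟩), zero_mul])
  have h1 := hψg t ht
  have h2 := hψg tU htUb
  have hYt : Y t = x := funext htx
  simp only [hYt] at h1
  have hA : 0 ≤ |g x| + w := by positivity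
  have h3 : C2 * (|g x| + w) * ∑ l ∈ univ.erase 0, |t l| ≤ (|g x| + w) * (1 / 2) := by
    calc C2 * (|g x| + w) * ∑ l ∈ univ.erase 0, |t l|
        ≤ C2 * (|g x| + w) * (2 / (L:ℝ)) ^ (1 / p - 1) := mul_le_mul_of_nonneg_left hsum (by positivity)
      _ = (|g x| + w) * (C2 * (2 / (L:ℝ)) ^ (1 / p - 1)) := by ring
      _ ≤ _ := mul_le_mul_of_nonneg_left hLe hA
  have h4 : |g x| ≤ |g x - MvPolynomial.eval t ψ| + |MvPolynomial.eval t ψ - MvPolynomial.eval tU ψ| +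
      |g (Y tU) - MvPolynomial.eval tU ψ| + |g (Y tU)| := by
    rw [abs_sub_comm (g (Y tU))]
    calc |g x| = |(g x - MvPolynomial.eval t ψ) + (MvPolynomial.eval t ψ - MvPolynomial.eval tU ψ) +
      (MvPolynomial.eval tU ψ - g (Y tU)) + g (Y tU)| := by congr 1; ring
      _ ≤ _ := (abs_add_le _ _).trans (add_le_add ((abs_add_le _ _).trans
          (add_le_add (abs_add_le _ _) le_rfl)) le_rfl)
  linarith

end ball

end WhitneyAux

/-- Theorem 5.9: for `0 < p < 1` and any `m ≥ 2`, `w_m(ℓ_pⁿ) ≤ C(p,m)` independently of `n`. -/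
theorem whitney_m_lp_quasinorm_uniform (p : ℝ) (hp0 : 0 < p) (hp1 : p < 1)
    (m : ℕ) (hm : 2 ≤ m) :
    ∃ C : ℝ, ∀ n : ℕ, 1 ≤ n →
      ∀ f : (Fin n → ℝ) → ℝ, ContinuousOn f (lpBall n p) → diffBound m (lpBall n p) f 1 →
        ∃ P : MvPolynomial (Fin n) ℝ, P.totalDegree ≤ m - 1 ∧
          ∀ x ∈ lpBall n p, |f x - MvPolynomial.eval x P| ≤ C := by
  obtain ⟨C, hC⟩ := WhitneyAux.main_bound hp0 hp1 (m := m) (by omega)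
  refine ⟨C, fun n _ f hf hd => ?_⟩
  obtain ⟨P, hP, hPf⟩ := hC n f hf hd
  exact ⟨P, by omega, hPf⟩
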